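/- Let P and Q be probability measures on a measurable space (Ω, ℱ) with P absolutely continuous with respect to Q, and let L = log(dP/dQ) where dP/dQ is the Radon–Nikodym derivative. Let σ ∈ (0, e^{−2}], B ≥ 1, r ∈ [0,1], and let W₁, W₂ : Ω → [0,∞) be measurable functions such that |L| ≤ W₁ + W₂ + log(1/σ) holds P-almost everywhere and such that for i ∈ {1,2} and every t ≥ 1 one has P(W_i ≥ B t^r) ≤ e^{−t}. Then for every v ≥ 1: ∫ L² dP ≤ 3 (2 B v^r + log(1/σ))² · KL(P‖Q) + 64 (2 B v^r + log(1/σ))² · e^{−v}. -/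

import Mathlib

open MeasureTheory Real
open scoped ENNReal Classical

/-- The Kullback-Leibler divergence `KL(P‖Q) = ∫ log(dP/dQ) dP ∈ [0,∞]`, equal to `+∞` if
`P` is not absolutely continuous with respect to `Q` or the log-likelihood ratio is not
integrable. -/
noncomputable def klDiv {Ω : Type*} [MeasurableSpace Ω] (P Q : Measure Ω) : ℝ≥0∞ :=
  if P ≪ Q ∧ Integrable (llr P Q) P then ENNReal.ofReal (∫ ω, llr P Q ω ∂P) else ⊤

lemma phi_bound (x M : ℝ) (hM : 4 ≤ M) (hx : |x| ≤ M) :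
    x ^ 2 ≤ 3 * M ^ 2 * (Real.exp (-x) - 1 + x) := by
  have hM2 : 16 ≤ M ^ 2 := by nlinarith
  have hφ : 0 ≤ Real.exp (-x) - 1 + x := by linarith [Real.add_one_le_exp (-x)]
  rcases le_total x 0 with h0 | h0
  · have := Real.quadratic_le_exp_of_nonneg (neg_nonneg.2 h0)
    nlinarith [sq_nonneg x]
  rcases le_total x 1 with h1 | h1
  · have h := Real.exp_bound (x := -x) (by rw [abs_neg, abs_of_nonneg h0]; exact h1)
      (n := 3) (by norm_num)
    rw [abs_neg, abs_of_nonneg h0] at h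
    have h' := (abs_le.1 h).1
    simp [Finset.sum_range_succ, Nat.factorial] at h'
    have h3 : x ^ 3 ≤ x ^ 2 := by nlinarith [sq_nonneg x]
    have : 5 / 18 * x ^ 2 ≤ Real.exp (-x) - 1 + x := by nlinarith
    nlinarith [sq_nonneg x]
  · have hx2 : x ^ 2 ≤ M ^ 2 := by
      rw [abs_of_nonneg h0] at hx
      nlinarith
    have he1 : (1 : ℝ) / 3 ≤ Real.exp (-1) := by
      rw [Real.exp_neg, one_div]
      exact inv_anti₀ (Real.exp_pos _) (by linarith [Real.exp_one_lt_d9])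
    have he2 : Real.exp (-1) ≤ 1 := Real.exp_le_one_iff.2 (by norm_num)
    have h2 : Real.exp (-x) = Real.exp (-1) * Real.exp (-(x - 1)) := by
      rw [← Real.exp_add]; congr 1; ring
    have h3 := Real.add_one_le_exp (-(x - 1))
    have : 1 / 3 ≤ Real.exp (-x) - 1 + x := by
      rw [h2]
      nlinarith [Real.exp_pos (-1)]
    nlinarith

lemma pw_bound (x w₁ w₂ l B r v : ℝ) (hl : 2 ≤ l) (hB : 1 ≤ B) (hr0 : 0 ≤ r) (hr1 : r ≤ 1)
    (hv : 1 ≤ v) (hx : |x| ≤ w₁ + w₂ + l) :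
    x ^ 2 ≤ 3 * (2 * B * v ^ r + l) ^ 2 * (Real.exp (-x) - 1 + x) ∨
    ∃ k : ℕ, (B * (v + k) ^ r ≤ w₁ ∨ B * (v + k) ^ r ≤ w₂) ∧
      x ^ 2 ≤ (2 * B * v ^ r + l) ^ 2 * 4 * (9 / 4) ^ k := by
  have hvr : 1 ≤ v ^ r := Real.one_le_rpow hv hr0
  have hBv : 1 ≤ B * v ^ r := by nlinarith
  have hM : 4 ≤ 2 * B * v ^ r + l := by nlinarith
  by_cases hex : ∃ k : ℕ, w₁ < B * (v + k) ^ r ∧ w₂ < B * (v + k) ^ r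
  · obtain ⟨h1, h2⟩ := Nat.find_spec hex
    rcases hk : Nat.find hex with _ | j
    · left
      rw [hk] at h1 h2
      simp only [Nat.cast_zero, add_zero] at h1 h2
      exact phi_bound x _ hM (by nlinarith)
    · right
      have hmin := Nat.find_min hex (m := j) (by omega)
      rw [hk] at h1 h2
      refine ⟨j, ?_, ?_⟩
      · by_contra! hcon
        exact hmin hcon
      · have hj : (0 : ℝ) ≤ j := Nat.cast_nonneg j
        have e1 : (v + (j + 1 : ℕ)) ^ r ≤ (j + 2) * v ^ r := by
          calc (v + (j + 1 : ℕ)) ^ r ≤ ((j + 2) * v) ^ r := by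
                apply Real.rpow_le_rpow (by positivity) _ hr0
                push_cast
                nlinarith
            _ = (j + 2 : ℝ) ^ r * v ^ r := Real.mul_rpow (by positivity) (by positivity)
            _ ≤ (j + 2) * v ^ r := by
                gcongr
                exact Real.rpow_le_self_of_one_le (by linarith) hr1
        have e2 : |x| ≤ (2 * B * v ^ r + l) * (j + 2) := by
          have := mul_le_mul_of_nonneg_left e1 (by linarith : (0 : ℝ) ≤ B)
          nlinarith
        have e3 : (j + 2 : ℝ) ≤ 2 * (3 / 2) ^ j := by
          have := one_add_mul_le_pow (a := (1 / 2 : ℝ)) (by norm_num) j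
          norm_num at this ⊢
          linarith
        have e4 : |x| ≤ (2 * B * v ^ r + l) * (2 * (3 / 2) ^ j) :=
          e2.trans (by gcongr)
        calc x ^ 2 = |x| ^ 2 := (sq_abs x).symm
          _ ≤ ((2 * B * v ^ r + l) * (2 * (3 / 2) ^ j)) ^ 2 := by gcongr
          _ = _ := by
            have : (9 / 4 : ℝ) ^ j = ((3 / 2) ^ j) ^ 2 := by
              rw [← pow_mul, mul_comm, pow_mul]; norm_num
            rw [this]; ring
  · right
    push Not at hex
    obtain ⟨k, hk⟩ := pow_unbounded_of_one_lt (x ^ 2) (by norm_num : (1 : ℝ) < 9 / 4)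
    refine ⟨k, ?_, ?_⟩
    · by_contra! hcon
      exact absurd hcon.2 (not_lt.2 (hex k hcon.1))
    · have : (0 : ℝ) < (9 / 4) ^ k := by positivity
      nlinarith [mul_le_mul_of_nonneg_right (show 1 ≤ (2 * B * v ^ r + l) ^ 2 * 4 by nlinarith) this.le]

lemma kl_bound {Ω : Type*} [MeasurableSpace Ω] (P Q : Measure Ω)
    [IsProbabilityMeasure P] [IsProbabilityMeasure Q] (hPQ : P ≪ Q) :
    ∫⁻ ω, ENNReal.ofReal (Real.exp (-llr P Q ω) - 1 + llr P Q ω) ∂P ≤ klDiv P Q := by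
  unfold klDiv
  split_ifs with h
  swap
  · exact le_top
  have he := exp_neg_llr hPQ
  have hi : Integrable (fun ω => Real.exp (-llr P Q ω)) P :=
    (Measure.integrable_toReal_rnDeriv (μ := Q) (ν := P)).congr he.symm
  have hle : ∫ ω, Real.exp (-llr P Q ω) ∂P ≤ 1 := by
    rw [integral_congr_ae he, integral_toReal (Measure.measurable_rnDeriv _ _).aemeasurable
      (Measure.rnDeriv_lt_top _ _)]
    have := Measure.lintegral_rnDeriv_le (μ := Q) (ν := P)
    rw [measure_univ] at this
    exact ENNReal.toReal_le_of_le_ofReal (by norm_num) (by simpa using this)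
  rw [← ofReal_integral_eq_lintegral_ofReal
    (f := fun ω => Real.exp (-llr P Q ω) - 1 + llr P Q ω) ((hi.sub (integrable_const 1)).add h.2)]
  · apply ENNReal.ofReal_le_ofReal
    have e1 := integral_add (hi.sub (integrable_const (1 : ℝ))) h.2
    have e2 := integral_sub hi (integrable_const (1 : ℝ))
    simp only [Pi.sub_apply] at e1
    rw [e1, e2]
    simp
    linarith
  · filter_upwards with ω
    have := Real.add_one_le_exp (-llr P Q ω)
    simp only [Pi.zero_apply, Pi.add_apply, Pi.sub_apply]
    linarith

/-- Control of the second moment of the log-likelihood ratio `L = log (dP/dQ)` by the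
Kullback-Leibler divergence, when `|L| ≤ W₁ + W₂ + log(1/σ)` for random variables `W₁, W₂`
with subpolynomial tails. -/
theorem stmt4 {Ω : Type*} [MeasurableSpace Ω] (P Q : Measure Ω)
    [IsProbabilityMeasure P] [IsProbabilityMeasure Q]
    (hPQ : P ≪ Q)
    (L : Ω → ℝ) (hL : L = fun ω => Real.log (P.rnDeriv Q ω).toReal)
    (σ : ℝ) (hσ0 : 0 < σ) (hσ1 : σ ≤ Real.exp (-2))
    (B : ℝ) (hB : 1 ≤ B) (r : ℝ) (hr0 : 0 ≤ r) (hr1 : r ≤ 1)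
    (W₁ W₂ : Ω → ℝ) (hW₁ : Measurable W₁) (hW₂ : Measurable W₂)
    (hW₁nn : ∀ ω, 0 ≤ W₁ ω) (hW₂nn : ∀ ω, 0 ≤ W₂ ω)
    (hbound : ∀ᵐ ω ∂P, |L ω| ≤ W₁ ω + W₂ ω + Real.log (1 / σ))
    (hW₁tail : ∀ t : ℝ, 1 ≤ t → P {ω | B * t ^ r ≤ W₁ ω} ≤ ENNReal.ofReal (Real.exp (-t)))
    (hW₂tail : ∀ t : ℝ, 1 ≤ t → P {ω | B * t ^ r ≤ W₂ ω} ≤ ENNReal.ofReal (Real.exp (-t))) :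
    ∀ v : ℝ, 1 ≤ v →
      ∫⁻ ω, ENNReal.ofReal ((L ω) ^ 2) ∂P
        ≤ ENNReal.ofReal (3 * (2 * B * v ^ r + Real.log (1 / σ)) ^ 2) * klDiv P Q
          + ENNReal.ofReal (64 * (2 * B * v ^ r + Real.log (1 / σ)) ^ 2 * Real.exp (-v)) := by
  intro v hv
  set l := Real.log (1 / σ) with hl_def
  have hl : 2 ≤ l := by
    rw [hl_def, one_div, Real.log_inv]
    have := Real.log_le_log hσ0 hσ1
    rw [Real.log_exp] at this
    linarith
  set M := 2 * B * v ^ r + l with hM_def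
  have hLm : Measurable L := by
    rw [hL]; exact measurable_llr P Q
  have hLl : L = llr P Q := hL
  let S : ℕ → Set Ω := fun k => {ω | B * (v + k) ^ r ≤ W₁ ω} ∪ {ω | B * (v + k) ^ r ≤ W₂ ω}
  have hS : ∀ k, MeasurableSet (S k) := fun k =>
    (measurableSet_le measurable_const hW₁).union (measurableSet_le measurable_const hW₂)
  have hPS : ∀ k, P (S k) ≤ ENNReal.ofReal (2 * Real.exp (-v) * (Real.exp (-1)) ^ k) := by
    intro k
    have hk : (1 : ℝ) ≤ v + k := by
      have : (0 : ℝ) ≤ k := Nat.cast_nonneg k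
      linarith
    refine (measure_union_le _ _).trans ((add_le_add (hW₁tail _ hk) (hW₂tail _ hk)).trans ?_)
    rw [← ENNReal.ofReal_add (Real.exp_pos _).le (Real.exp_pos _).le]
    apply ENNReal.ofReal_le_ofReal
    apply le_of_eq
    rw [← Real.exp_nat_mul, mul_assoc, ← Real.exp_add, ← two_mul]
    congr 2
    ring
  have hpw : ∀ᵐ ω ∂P, ENNReal.ofReal ((L ω) ^ 2) ≤
      ENNReal.ofReal (3 * M ^ 2) * ENNReal.ofReal (Real.exp (-llr P Q ω) - 1 + llr P Q ω)
      + ∑' k : ℕ, (S k).indicator (fun _ => ENNReal.ofReal (M ^ 2 * 4 * (9 / 4) ^ k)) ω := by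
    filter_upwards [hbound] with ω hω
    rcases pw_bound (L ω) (W₁ ω) (W₂ ω) l B r v hl hB hr0 hr1 hv hω with h | ⟨k, hk, h⟩
    · refine le_trans ?_ le_self_add
      rw [← ENNReal.ofReal_mul (by positivity), ← hLl]
      exact ENNReal.ofReal_le_ofReal h
    · refine le_trans ?_ le_add_self
      refine le_trans ?_ (ENNReal.le_tsum k)
      rw [Set.indicator_of_mem (show ω ∈ S k from hk)]
      exact ENNReal.ofReal_le_ofReal h
  refine (lintegral_mono_ae hpw).trans ?_
  have hφm : Measurable
      (fun ω => ENNReal.ofReal (Real.exp (-llr P Q ω) - 1 + llr P Q ω)) := by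
    have := measurable_llr P Q
    fun_prop
  rw [lintegral_add_left (hφm.const_mul _), lintegral_const_mul _ hφm]
  refine add_le_add (mul_le_mul_right (kl_bound P Q hPQ) _) ?_
  rw [lintegral_tsum (fun k => (measurable_const.indicator (hS k)).aemeasurable)]
  have he : Real.exp (-1) ≤ 10 / 27 := by
    rw [Real.exp_neg]
    have h1 := Real.exp_one_gt_d9
    have : (27 / 10 : ℝ) ≤ Real.exp 1 := by linarith
    calc (Real.exp 1)⁻¹ ≤ (27 / 10 : ℝ)⁻¹ := inv_anti₀ (by norm_num) this
      _ = 10 / 27 := by norm_num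
  have hterm : ∀ k : ℕ,
      ∫⁻ ω, (S k).indicator (fun _ => ENNReal.ofReal (M ^ 2 * 4 * (9 / 4) ^ k)) ω ∂P
        ≤ ENNReal.ofReal (8 * M ^ 2 * Real.exp (-v) * (5 / 6) ^ k) := by
    intro k
    rw [lintegral_indicator_const (hS k)]
    refine (mul_le_mul_right (hPS k) _).trans ?_
    rw [← ENNReal.ofReal_mul (by positivity)]
    apply ENNReal.ofReal_le_ofReal
    have h56 : (5 / 6 : ℝ) ^ k = (9 / 4) ^ k * (10 / 27) ^ k := by
      rw [← mul_pow]; norm_num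
    rw [h56]
    calc M ^ 2 * 4 * (9 / 4) ^ k * (2 * Real.exp (-v) * Real.exp (-1) ^ k)
        ≤ M ^ 2 * 4 * (9 / 4) ^ k * (2 * Real.exp (-v) * (10 / 27) ^ k) := by gcongr
      _ = _ := by ring
  refine (ENNReal.tsum_le_tsum hterm).trans ?_
  have hsum : HasSum (fun k : ℕ => 8 * M ^ 2 * Real.exp (-v) * (5 / 6 : ℝ) ^ k)
      (8 * M ^ 2 * Real.exp (-v) * (1 - 5 / 6)⁻¹) :=
    (hasSum_geometric_of_lt_one (by norm_num) (by norm_num)).mul_left _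
  rw [← ENNReal.ofReal_tsum_of_nonneg (fun k => by positivity) hsum.summable, hsum.tsum_eq]
  apply ENNReal.ofReal_le_ofReal
  have : 0 ≤ M ^ 2 * Real.exp (-v) := by positivity
  norm_num
  nlinarith
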